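/- Fix a real number k ≥ 1 and a nonzero real number p. The chain of inequalities (k/(k+2))·(sinh(x)/x)^(k·p) + (2/(k+2))·(tanh(x)/x)^p > (2/(k+2))·(x/sinh(x))^(k·p) + (k/(k+2))·(x/tanh(x))^p > 1 holds for every x ∈ (0, ∞) if and only if k ≥ 2 and p ≥ 12/(5(k+2)). -/

import Mathlib

open Real Set

lemma aux_pos (f f' : ℝ → ℝ) (hc : ContinuousOn f (Ici 0)) (h0 : f 0 = 0)
    (hd : ∀ x > 0, HasDerivAt f (f' x) x) (hp : ∀ x > 0, 0 < f' x) (x : ℝ) (hx : 0 < x) :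
    0 < f x := by
  have hm : StrictMonoOn f (Ici 0) := by
    apply strictMonoOn_of_deriv_pos (convex_Ici 0) hc
    intro z hz
    rw [interior_Ici] at hz
    rw [(hd z hz).deriv]
    exact hp z hz
  have := hm (mem_Ici.2 le_rfl) (mem_Ici.2 hx.le) hx
  rwa [h0] at this

lemma aux_nonneg (f f' : ℝ → ℝ) (hc : ContinuousOn f (Ici 0)) (h0 : f 0 = 0)
    (hd : ∀ x > 0, HasDerivAt f (f' x) x) (hp : ∀ x > 0, 0 ≤ f' x) (x : ℝ) (hx : 0 < x) :
    0 ≤ f x := by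
  have hm : MonotoneOn f (Ici 0) := by
    apply monotoneOn_of_deriv_nonneg (convex_Ici 0) hc
    · intro z hz
      rw [interior_Ici] at hz
      exact (hd z hz).differentiableAt.differentiableWithinAt
    intro z hz
    rw [interior_Ici] at hz
    rw [(hd z hz).deriv]
    exact hp z hz
  have := hm (mem_Ici.2 le_rfl) (mem_Ici.2 hx.le) hx.le
  rwa [h0] at this

lemma aux1 (x : ℝ) (hx : 0 < x) : 0 < x * cosh x - sinh x := by
  refine aux_pos (fun x => x * cosh x - sinh x) (fun x => x * sinh x) (by fun_prop) (by simp)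
    (fun x hx => ?_) (fun x hx => mul_pos hx (sinh_pos_iff.2 hx)) x hx
  refine HasDerivAt.congr_deriv (((hasDerivAt_id x).mul (hasDerivAt_cosh x)).sub (hasDerivAt_sinh x)) ?_
  simp

/-- M -/
lemma aux2 (x : ℝ) (hx : 0 < x) : 0 < (x ^ 2 + 3) * sinh x - 3 * x * cosh x := by
  refine aux_pos (fun x => (x ^ 2 + 3) * sinh x - 3 * x * cosh x)
    (fun x => x * (x * cosh x - sinh x)) (by fun_prop) (by simp)
    (fun x hx => ?_) (fun x hx => mul_pos hx (aux1 x hx)) x hx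
  refine HasDerivAt.congr_deriv (((((hasDerivAt_id x).pow 2).add_const 3).mul (hasDerivAt_sinh x)).sub
    (((hasDerivAt_id x).const_mul 3).mul (hasDerivAt_cosh x))) ?_
  simp; ring

/-- one step towards N -/
lemma aux3 (x : ℝ) (hx : 0 < x) : x ^ 3 / 3 ≤ x * cosh x - sinh x := by
  have := aux_nonneg (fun x => x * cosh x - sinh x - x ^ 3 / 3) (fun x => x * (sinh x - x))
    (by fun_prop) (by simp)
    (fun x hx => ?_) (fun x hx => mul_nonneg hx.le (by linarith [self_le_sinh_iff.2 hx.le])) x hx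
  · simpa using this
  refine HasDerivAt.congr_deriv ((((hasDerivAt_id x).mul (hasDerivAt_cosh x)).sub (hasDerivAt_sinh x)).sub
    (((hasDerivAt_id x).pow 3).div_const 3)) ?_
  simp; ring

lemma aux4 (x : ℝ) (hx : 0 < x) : x ^ 4 / 12 ≤ 2 - 2 * cosh x + x * sinh x := by
  have := aux_nonneg (fun x => 2 - 2 * cosh x + x * sinh x - x ^ 4 / 12)
    (fun x => x * cosh x - sinh x - x ^ 3 / 3)
    (by fun_prop) (by simp)
    (fun x hx => ?_) (fun x hx => by linarith [aux3 x hx]) x hx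
  · simpa using this
  refine HasDerivAt.congr_deriv (((((hasDerivAt_cosh x).const_mul 2).const_sub 2).add
    ((hasDerivAt_id x).mul (hasDerivAt_sinh x))).sub
    (((hasDerivAt_id x).pow 4).div_const 12)) ?_
  simp; ring

/-- N -/
lemma aux5 (x : ℝ) (hx : 0 < x) : x ^ 5 / 60 ≤ x * (cosh x + 2) - 3 * sinh x := by
  have := aux_nonneg (fun x => x * (cosh x + 2) - 3 * sinh x - x ^ 5 / 60)
    (fun x => 2 - 2 * cosh x + x * sinh x - x ^ 4 / 12)
    (by fun_prop) (by simp)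
    (fun x hx => ?_) (fun x hx => by linarith [aux4 x hx]) x hx
  · simpa using this
  refine HasDerivAt.congr_deriv ((((hasDerivAt_id x).mul ((hasDerivAt_cosh x).add_const 2)).sub
    ((hasDerivAt_sinh x).const_mul 3)).sub
    (((hasDerivAt_id x).pow 5).div_const 60)) ?_
  simp; ring

lemma aux6 (x : ℝ) (hx : 0 < x) :
    0 ≤ cosh x * sinh x + 2 * sinh x - 2 * (x * cosh x) - x := by
  refine aux_nonneg (fun x => cosh x * sinh x + 2 * sinh x - 2 * (x * cosh x) - x)
    (fun x => 2 * sinh x * (sinh x - x)) (by fun_prop) (by simp)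
    (fun x hx => ?_) (fun x hx => ?_) x hx
  · refine HasDerivAt.congr_deriv ((((((hasDerivAt_cosh x).mul (hasDerivAt_sinh x)).add
      ((hasDerivAt_sinh x).const_mul 2)).sub
      (((hasDerivAt_id x).mul (hasDerivAt_cosh x)).const_mul 2))).sub (hasDerivAt_id x)) ?_
    simp
    nlinarith [cosh_sq x]
  · have h1 := sinh_pos_iff.2 hx
    have h2 := self_lt_sinh_iff.2 hx
    nlinarith

/-! series -/
lemma hs_congr {f g : ℕ → ℝ} {a b : ℝ} (h : HasSum f a) (h1 : ∀ n, f n = g n) (h2 : a = b) :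
    HasSum g b := by
  have : f = g := funext h1
  subst this; subst h2; exact h

lemma ser1 (c y : ℝ) : HasSum (fun m : ℕ => c ^ (2*m+1) * (y ^ (2*m+1) / ((2*m+1).factorial : ℝ)))
    (sinh (c * y)) := by
  refine hs_congr (hasSum_sinh (c * y)) (fun m => ?_) ?_
  · rw [mul_pow]; ring
  · rfl

lemma ser2 (c y : ℝ) : HasSum (fun m : ℕ => (2*m+1) * c ^ (2*m) *
    (y ^ (2*m+1) / ((2*m+1).factorial : ℝ))) (y * cosh (c * y)) := by
  refine hs_congr ((hasSum_cosh (c * y)).mul_left y) (fun m => ?_) ?_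
  · rw [mul_pow, Nat.factorial_succ]
    push_cast
    have : (2 * (m:ℝ) + 1) ≠ 0 := by positivity
    have : ((2*m).factorial : ℝ) ≠ 0 := by positivity
    field_simp
    ring
  · rfl

lemma ser3 (c y : ℝ) (hc : c ≠ 0) : HasSum (fun m : ℕ => (2*m+1) * (2 * m) * c ^ (2*m+1) / c ^ 2 *
    (y ^ (2*m+1) / ((2*m+1).factorial : ℝ))) (y ^ 2 * sinh (c * y)) := by
  have h := (hasSum_nat_add_iff (f := fun m : ℕ => (2*(m:ℝ)+1) * (2 * m) * c ^ (2*m+1) / c ^ 2 *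
    (y ^ (2*m+1) / ((2*m+1).factorial : ℝ))) (g := y ^ 2 * sinh (c * y)) 1).1 ?_
  · simpa using h
  refine hs_congr ((ser1 c y).mul_left (y ^ 2)) (fun m => ?_) ?_
  · rw [show 2 * (m + 1) + 1 = 2 * m + 1 + 1 + 1 by ring, Nat.factorial_succ (2*m+1+1),
      Nat.factorial_succ (2*m+1)]
    push_cast
    have : (2 * (m:ℝ) + 1 + 1) ≠ 0 := by positivity
    have : (2 * (m:ℝ) + 1 + 1 + 1) ≠ 0 := by positivity
    have : ((2*m+1).factorial : ℝ) ≠ 0 := by positivity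
    field_simp
    ring
  · rfl

lemma ser4 (c y : ℝ) (hc : c ≠ 0) :
    HasSum (fun m : ℕ => (2*m+1) * (2 * m) * (2 * m - 1) * c ^ (2*m) / c ^ 2 *
    (y ^ (2*m+1) / ((2*m+1).factorial : ℝ))) (y ^ 3 * cosh (c * y)) := by
  have h := (hasSum_nat_add_iff (f := fun m : ℕ => (2*(m:ℝ)+1) * (2 * m) * (2 * m - 1) *
    c ^ (2*m) / c ^ 2 *
    (y ^ (2*m+1) / ((2*m+1).factorial : ℝ))) (g := y ^ 3 * cosh (c * y)) 1).1 ?_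
  · simpa using h
  refine hs_congr ((ser2 c y).mul_left (y ^ 2)) (fun m => ?_) ?_
  · rw [show 2 * (m + 1) + 1 = 2 * m + 1 + 1 + 1 by ring, Nat.factorial_succ (2*m+1+1),
      Nat.factorial_succ (2*m+1)]
    push_cast
    have : (2 * (m:ℝ) + 1 + 1) ≠ 0 := by positivity
    have : (2 * (m:ℝ) + 1 + 1 + 1) ≠ 0 := by positivity
    have : ((2*m+1).factorial : ℝ) ≠ 0 := by positivity
    field_simp
    ring
  · ring

noncomputable def cP (m : ℕ) : ℝ :=
  9 ^ m * ((2*m+1)^2 - 15 * (2*m+1) + 18) + 4 ^ m * ((2*m+1) * ((2*m+1)^2 + 4*(2*m+1) - 13))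
    + (-18 + 14 * (2*m+1) + 35 * ((2*m+1)*(2*m)) - 12 * ((2*m+1)*(2*m)*(2*m-1)))

lemma cP_pos (m : ℕ) (hm : 5 ≤ m) : 0 < cP m := by
  have h4 : (1024:ℝ) ≤ 4 ^ m := by
    calc (1024:ℝ) = 4 ^ 5 := by norm_num
      _ ≤ 4 ^ m := pow_le_pow_right₀ (by norm_num) hm
  rcases Nat.lt_or_ge m 7 with h | h
  · interval_cases m <;> norm_num [cP]
  · unfold cP
    have hm' : (7:ℝ) ≤ m := by exact_mod_cast h
    have e1 : 0 ≤ (9:ℝ) ^ m * ((2*m+1)^2 - 15 * (2*m+1) + 18) := by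
      apply mul_nonneg (by positivity); nlinarith
    have e2 : 1024 * ((2*m+1) * ((2*m+1)^2 + 4*(2*m+1) - 13)) ≤
        (4:ℝ) ^ m * ((2*m+1) * ((2*m+1)^2 + 4*(2*m+1) - 13)) := by
      apply mul_le_mul_of_nonneg_right h4
      apply mul_nonneg (by positivity); nlinarith
    have e3 : 0 < 1024 * ((2*(m:ℝ)+1) * ((2*m+1)^2 + 4*(2*m+1) - 13)) +
      (-18 + 14 * (2*m+1) + 35 * ((2*m+1)*(2*m)) - 12 * ((2*m+1)*(2*m)*(2*m-1))) := by
      obtain ⟨z, hz⟩ : ∃ z : ℝ, (m:ℝ) = z + 7 := ⟨m - 7, by ring⟩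
      have : 0 ≤ z := by linarith
      rw [hz]; ring_nf; positivity
    linarith

lemma P_pos (y : ℝ) (hy : 0 < y) :
    0 < 3 * (y * cosh y - sinh y) * (sinh y - y) * (y + y * cosh y - 2 * sinh y) -
      5 * y * sinh y * (cosh y * sinh y - sinh y + y * cosh y - y - y ^ 2 * sinh y) := by
  have H := ((((((((((ser1 3 y).mul_left 6).sub ((ser2 3 y).mul_left 14)).add
    ((ser3 3 y (by norm_num)).mul_left 3)).sub ((ser2 2 y).mul_left 8)).add
    ((ser3 2 y (by norm_num)).mul_left 14)).add ((ser4 2 y (by norm_num)).mul_left 4)).sub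
    ((ser1 1 y).mul_left 18)).add ((ser2 1 y).mul_left 14)).add
    ((ser3 1 y (by norm_num)).mul_left 35)).sub ((ser4 1 y (by norm_num)).mul_left 12)
  have H2 := (hasSum_nat_add_iff' 5).2 H
  have H3 : HasSum (fun m : ℕ => cP (m+5) * (y ^ (2*(m+5)+1) / ((2*(m+5)+1).factorial : ℝ)))
    (4 * (3 * (y * cosh y - sinh y) * (sinh y - y) * (y + y * cosh y - 2 * sinh y) -
      5 * y * sinh y * (cosh y * sinh y - sinh y + y * cosh y - y - y ^ 2 * sinh y))) := by
    refine hs_congr H2 (fun m => ?_) ?_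
    · unfold cP
      rw [show (9:ℝ) = 3 ^ 2 by norm_num, show (4:ℝ) ^ (m+5) = (2 ^ 2) ^ (m+5) by norm_num,
        ← pow_mul, ← pow_mul, pow_succ (3:ℝ) (2*(m+5)), pow_succ (2:ℝ) (2*(m+5))]
      push_cast
      simp only [one_pow]
      ring
    · simp only [Finset.sum_range_succ, Finset.sum_range_zero]
      norm_num [Nat.factorial]
      rw [sinh_three_mul, cosh_three_mul, sinh_two_mul, cosh_two_mul]
      have hc : cosh y ^ 2 = sinh y ^ 2 + 1 := by linarith [cosh_sq y]
      have hc3 : cosh y ^ 3 = (sinh y ^ 2 + 1) * cosh y := by rw [← hc]; ring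
      ring_nf
      simp only [hc3, hc]
      ring_nf
  have hn : ∀ m : ℕ, 0 < cP (m+5) * (y ^ (2*(m+5)+1) / ((2*(m+5)+1).factorial : ℝ)) := by
    intro m
    have := cP_pos (m+5) (by omega)
    positivity
  have := le_hasSum H3 0 (fun j _ => (hn j).le)
  linarith [hn 0]

noncomputable def sL (x : ℝ) : ℝ := log (sinh x / x)
noncomputable def tL (x : ℝ) : ℝ := log (x / tanh x)
noncomputable def rL (y : ℝ) : ℝ := log ((y + y * cosh y - 2 * sinh y) / (sinh y - y))

lemma log_cosh_le (x : ℝ) : log (cosh x) ≤ x ^ 2 / 2 := by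
  rw [log_le_iff_le_exp (cosh_pos x)]
  exact cosh_le_exp_half_sq x

lemma cont_aux (f : ℝ → ℝ) (h0 : f 0 = 0) (hd : ∀ x > 0, ContinuousAt f x)
    (hl : ∀ x > 0, 0 ≤ f x) (hu : ∀ x > 0, f x ≤ x ^ 2 / 2) : ContinuousOn f (Ici 0) := by
  intro x hx
  rcases eq_or_lt_of_le (mem_Ici.1 hx) with h | h
  · subst h
    unfold ContinuousWithinAt
    rw [h0]
    have hz : Filter.Tendsto (fun x : ℝ => x ^ 2 / 2) (nhdsWithin 0 (Ici 0)) (nhds 0) := by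
      have : ContinuousWithinAt (fun x : ℝ => x ^ 2 / 2) (Ici 0) 0 := by fun_prop
      simpa [ContinuousWithinAt] using this
    refine tendsto_of_tendsto_of_tendsto_of_le_of_le' tendsto_const_nhds hz ?_ ?_
    · filter_upwards [self_mem_nhdsWithin] with z hz
      rcases eq_or_lt_of_le (mem_Ici.1 hz) with h | h
      · rw [← h, h0]
      · exact hl z h
    · filter_upwards [self_mem_nhdsWithin] with z hz
      rcases eq_or_lt_of_le (mem_Ici.1 hz) with h | h
      · rw [← h, h0]; simp
      · exact hu z h
  · exact (hd x h).continuousWithinAt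

lemma sinh_p {x : ℝ} (hx : 0 < x) : 0 < sinh x := sinh_pos_iff.2 hx
lemma sinh_g {x : ℝ} (hx : 0 < x) : 0 < sinh x - x := by linarith [self_lt_sinh_iff.2 hx]
lemma den_p {x : ℝ} (hx : 0 < x) : 0 < x + x * cosh x - 2 * sinh x := by
  have := aux5 x hx
  have := sinh_g hx
  have : 0 < x ^ 5 := by positivity
  nlinarith

lemma sL_deriv (x : ℝ) (hx : 0 < x) : HasDerivAt sL ((x * cosh x - sinh x) / (x * sinh x)) x := by
  have h1 := sinh_p hx
  have h := ((hasDerivAt_sinh x).div (hasDerivAt_id x) hx.ne').log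
    (by simpa using (div_pos h1 hx).ne')
  refine HasDerivAt.congr_deriv h ?_
  simp
  field_simp

lemma tL_eq (x : ℝ) (hx : 0 < x) : tL x = log (cosh x) - sL x := by
  unfold tL sL
  rw [tanh_eq_sinh_div_cosh, ← log_div (cosh_pos x).ne' (div_pos (sinh_p hx) hx).ne']
  congr 1
  have := sinh_p hx
  have := cosh_pos x
  field_simp

lemma lc_deriv (x : ℝ) : HasDerivAt (fun x => log (cosh x)) (sinh x / cosh x) x :=
  (hasDerivAt_cosh x).log (cosh_pos x).ne'

lemma lc_cont : ContinuousOn (fun x => log (cosh x)) (Ici 0) :=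
  fun x _ => (lc_deriv x).continuousAt.continuousWithinAt

lemma tL_deriv (x : ℝ) (hx : 0 < x) :
    HasDerivAt tL ((sinh x * cosh x - x) / (x * sinh x * cosh x)) x := by
  have h := (lc_deriv x).sub (sL_deriv x hx)
  have h2 : HasDerivAt tL _ x := h.congr_of_eventuallyEq (by
    filter_upwards [lt_mem_nhds hx] with z hz
    exact tL_eq z hz)
  refine h2.congr_deriv ?_
  have := sinh_p hx
  have := cosh_pos x
  field_simp
  nlinarith [cosh_sq x]

lemma sL_pos (x : ℝ) (hx : 0 < x) : 0 < sL x := by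
  apply log_pos
  rw [lt_div_iff₀ hx]; linarith [self_lt_sinh_iff.2 hx]

lemma sL_le_lc (x : ℝ) (hx : 0 < x) : sL x ≤ log (cosh x) := by
  apply log_le_log (div_pos (sinh_p hx) hx)
  rw [div_le_iff₀ hx]
  linarith [aux1 x hx]

lemma tL_pos (x : ℝ) (hx : 0 < x) : 0 < tL x := by
  apply log_pos
  have := sinh_p hx
  have := cosh_pos x
  rw [tanh_eq_sinh_div_cosh, lt_div_iff₀ (by positivity), one_mul, div_lt_iff₀ (by positivity)]
  linarith [aux1 x hx]

lemma sL_cont : ContinuousOn sL (Ici 0) :=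
  cont_aux sL (by simp [sL]) (fun x hx => (sL_deriv x hx).continuousAt)
    (fun x hx => (sL_pos x hx).le) (fun x hx => (sL_le_lc x hx).trans (log_cosh_le x))

lemma tL_cont : ContinuousOn tL (Ici 0) :=
  cont_aux tL (by simp [tL]) (fun x hx => (tL_deriv x hx).continuousAt)
    (fun x hx => (tL_pos x hx).le) (fun x hx => by
      linarith [tL_eq x hx, sL_pos x hx, log_cosh_le x])

lemma sL_zero : sL 0 = 0 := by simp [sL]
lemma tL_zero : tL 0 = 0 := by simp [tL]

lemma sL_le (x : ℝ) (hx : 0 < x) : sL x ≤ x ^ 2 / 6 := by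
  have := aux_nonneg (fun x => x ^ 2 / 6 - sL x) (fun x => x / 3 - (x * cosh x - sinh x) / (x * sinh x))
    ((by fun_prop : ContinuousOn (fun x : ℝ => x ^ 2 / 6) (Ici 0)).sub sL_cont) (by simp [sL_zero])
    (fun x hx => ?_) (fun x hx => ?_) x hx
  · simpa using this
  · refine HasDerivAt.congr_deriv ((((hasDerivAt_id x).pow 2).div_const 6).sub (sL_deriv x hx)) ?_
    simp; ring
  · have := sinh_p hx
    rw [sub_nonneg, div_le_iff₀ (by positivity)]
    nlinarith [aux2 x hx]

lemma tL_le (x : ℝ) (hx : 0 < x) : tL x ≤ x ^ 2 / 3 := by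
  have h1 := sinh_p hx
  have h2 := cosh_pos x
  have : x / tanh x ≤ x ^ 2 / 3 + 1 := by
    rw [tanh_eq_sinh_div_cosh, div_div_eq_mul_div, div_le_iff₀ h1]
    nlinarith [aux2 x hx]
  have h3 : 0 < x / tanh x := by
    rw [tanh_eq_sinh_div_cosh]; positivity
  have := log_le_sub_one_of_pos h3
  unfold tL
  linarith

lemma y_div_sinh (y : ℝ) (hy : 0 < y) : sinh y * (1 - y ^ 2 / 2) ≤ y := by
  have h1 := sinh_p hy
  have h2 := cosh_pos y
  have h3 := cosh_le_exp_half_sq y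
  have h4 := aux1 y hy
  have h5 : 1 - y ^ 2 / 2 ≤ exp (- (y ^ 2 / 2)) := by linarith [add_one_le_exp (-(y ^ 2 / 2))]
  have h6 : exp (- (y ^ 2 / 2)) * exp (y ^ 2 / 2) = 1 := by rw [← exp_add]; simp
  calc sinh y * (1 - y ^ 2 / 2) ≤ sinh y * exp (- (y ^ 2 / 2)) := by gcongr
    _ ≤ (y * exp (y ^ 2 / 2)) * exp (- (y ^ 2 / 2)) := by gcongr; nlinarith
    _ = y := by rw [mul_assoc, mul_comm (exp (y^2/2)), h6, mul_one]

lemma lc_ge (x : ℝ) (hx : 0 < x) : x ^ 2 / 2 - x ^ 4 / 8 ≤ log (cosh x) := by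
  have := aux_nonneg (fun x => log (cosh x) - (x ^ 2 / 2 - x ^ 4 / 8))
    (fun x => sinh x / cosh x - (x - x ^ 3 / 2))
    (lc_cont.sub (by fun_prop)) (by simp)
    (fun x hx => ?_) (fun x hx => ?_) x hx
  · simpa using this
  · refine HasDerivAt.congr_deriv ((lc_deriv x).sub ((((hasDerivAt_id x).pow 2).div_const 2).sub
      (((hasDerivAt_id x).pow 4).div_const 8))) ?_
    simp; ring
  · have h1 := sinh_p hx
    have h2 := cosh_pos x
    have h3 := cosh_le_exp_half_sq x
    have h7 := self_lt_sinh_iff.2 hx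
    have h5 : 1 - x ^ 2 / 2 ≤ exp (- (x ^ 2 / 2)) := by linarith [add_one_le_exp (-(x ^ 2 / 2))]
    have h6 : exp (- (x ^ 2 / 2)) * exp (x ^ 2 / 2) = 1 := by rw [← exp_add]; simp
    have h8 : cosh x * (1 - x ^ 2 / 2) ≤ 1 := by
      calc cosh x * (1 - x ^ 2 / 2) ≤ cosh x * exp (- (x ^ 2 / 2)) := by gcongr
        _ ≤ exp (x ^ 2 / 2) * exp (- (x ^ 2 / 2)) := by gcongr
        _ = 1 := by rw [mul_comm, h6]
    rw [sub_nonneg, le_div_iff₀ h2]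
    nlinarith

/-- The expansion of `2s - t` from below. -/
lemma st_ge (x : ℝ) (hx : 0 < x) : x ^ 4 / 15 - 4 * x ^ 6 / 45 ≤ 2 * sL x - tL x := by
  have := aux_nonneg (fun x => 3 * sL x - log (cosh x) - (x ^ 4 / 15 - 4 * x ^ 6 / 45))
    (fun x => 3 * ((x * cosh x - sinh x) / (x * sinh x)) - sinh x / cosh x -
      (4 * x ^ 3 / 15 - 8 * x ^ 5 / 15))
    (((continuousOn_const.mul sL_cont).sub lc_cont).sub (by fun_prop)) (by simp [sL_zero])
    (fun x hx => ?_) (fun x hx => ?_) x hx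
  · linarith [tL_eq x hx]
  · refine HasDerivAt.congr_deriv ((((sL_deriv x hx).const_mul 3).sub (lc_deriv x)).sub
      ((((hasDerivAt_id x).pow 4).div_const 15).sub
      ((((hasDerivAt_id x).pow 6).const_mul 4).div_const 45))) ?_
    simp; ring
  · have h1 := sinh_p hx
    have h2 := cosh_pos x
    have h3 := aux5 (2 * x) (by positivity)
    have h4 := y_div_sinh (2 * x) (by positivity)
    rw [sinh_two_mul] at h3 h4
    rw [cosh_two_mul] at h3
    have e : 3 * ((x * cosh x - sinh x) / (x * sinh x)) - sinh x / cosh x =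
      (3 * (x * cosh x - sinh x) * cosh x - x * sinh x ^ 2) / (x * sinh x * cosh x) := by
      field_simp
    rw [sub_nonneg, e, le_div_iff₀ (by positivity)]
    have h5 : 4 * x ^ 4 / 15 * (sinh x * cosh x * (1 - 2 * x ^ 2)) ≤ 4 * x ^ 4 / 15 * x := by
      apply mul_le_mul_of_nonneg_left _ (by positivity)
      linarith
    nlinarith [cosh_sq x]

lemma st_pos (x : ℝ) (hx : 0 < x) : 0 < 2 * sL x - tL x := by
  have := aux_pos (fun x => 3 * sL x - log (cosh x))
    (fun x => 3 * ((x * cosh x - sinh x) / (x * sinh x)) - sinh x / cosh x)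
    ((continuousOn_const.mul sL_cont).sub lc_cont) (by simp [sL_zero])
    (fun x hx => ?_) (fun x hx => ?_) x hx
  · linarith [tL_eq x hx]
  · exact ((sL_deriv x hx).const_mul 3).sub (lc_deriv x)
  · have h1 := sinh_p hx
    have h2 := cosh_pos x
    have h3 := aux5 (2 * x) (by positivity)
    have h4 : 0 < (2 * x) ^ 5 := by positivity
    rw [sinh_two_mul, cosh_two_mul] at h3
    have e : 3 * ((x * cosh x - sinh x) / (x * sinh x)) - sinh x / cosh x =
      (3 * (x * cosh x - sinh x) * cosh x - x * sinh x ^ 2) / (x * sinh x * cosh x) := by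
      field_simp
    rw [e]
    apply div_pos _ (by positivity)
    nlinarith [cosh_sq x]

lemma rL_eq (y : ℝ) (hy : 0 < y) :
    rL y = log (y + y * cosh y - 2 * sinh y) - log (sinh y - y) :=
  log_div (den_p hy).ne' (sinh_g hy).ne'

lemma rL_deriv (y : ℝ) (hy : 0 < y) : HasDerivAt rL
    ((1 - cosh y + y * sinh y) / (y + y * cosh y - 2 * sinh y) - (cosh y - 1) / (sinh y - y)) y := by
  have d1 : HasDerivAt (fun y => y + y * cosh y - 2 * sinh y) (1 - cosh y + y * sinh y) y := by
    refine HasDerivAt.congr_deriv (((hasDerivAt_id y).add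
      ((hasDerivAt_id y).mul (hasDerivAt_cosh y))).sub ((hasDerivAt_sinh y).const_mul 2)) ?_
    simp; ring
  have h := (d1.log (den_p hy).ne').sub
    (((hasDerivAt_sinh y).sub (hasDerivAt_id y)).log (sinh_g hy).ne')
  refine h.congr_of_eventuallyEq ?_
  filter_upwards [lt_mem_nhds hy] with z hz
  exact rL_eq z hz

lemma rL_cont : ContinuousOn rL (Ici 0) := by
  refine cont_aux rL (by simp [rL]) (fun x hx => (rL_deriv x hx).continuousAt) ?_ ?_
  · intro x hx
    apply log_nonneg
    rw [le_div_iff₀ (sinh_g hx)]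
    have := aux5 x hx
    have : 0 < x ^ 5 := by positivity
    linarith
  · intro x hx
    refine le_trans ?_ (log_cosh_le x)
    apply log_le_log (div_pos (den_p hx) (sinh_g hx))
    rw [div_le_iff₀ (sinh_g hx)]
    linarith [aux6 x hx]

lemma alg_aux (y s A B C U V : ℝ) (hy : y ≠ 0) (hs : s ≠ 0) (hA : A ≠ 0) (hB : B ≠ 0) :
    3 / 5 * (C / (y * s)) - (U / B - V / A) =
      (3 * C * A * B - 5 * y * s * (U * A - V * B)) / (5 * (y * s) * A * B) := by
  field_simp

lemma key (y : ℝ) (hy : 0 < y) : rL y < 3 / 5 * sL y := by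
  have := aux_pos (fun y => 3 / 5 * sL y - rL y)
    (fun y => 3 / 5 * ((y * cosh y - sinh y) / (y * sinh y)) -
    ((1 - cosh y + y * sinh y) / (y + y * cosh y - 2 * sinh y) - (cosh y - 1) / (sinh y - y)))
    ((continuousOn_const.mul sL_cont).sub rL_cont) (by simp [sL_zero, rL])
    (fun x hx => ((sL_deriv x hx).const_mul _).sub (rL_deriv x hx)) (fun y hy => ?_) y hy
  · linarith
  · have h1 := sinh_p hy
    have h2 := sinh_g hy
    have h3 := den_p hy
    have h4 := P_pos y hy
    have e : 3 / 5 * ((y * cosh y - sinh y) / (y * sinh y)) -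
      ((1 - cosh y + y * sinh y) / (y + y * cosh y - 2 * sinh y) - (cosh y - 1) / (sinh y - y)) =
      (3 * (y * cosh y - sinh y) * (sinh y - y) * (y + y * cosh y - 2 * sinh y) -
      5 * y * sinh y * (cosh y * sinh y - sinh y + y * cosh y - y - y ^ 2 * sinh y)) /
      (5 * (y * sinh y) * (sinh y - y) * (y + y * cosh y - 2 * sinh y)) := by
      rw [alg_aux y (sinh y) (sinh y - y) (y + y * cosh y - 2 * sinh y) _ _ _ hy.ne' h1.ne' h2.ne'
        h3.ne']
      congr 1
      have hs : (1 - cosh y + y * sinh y) * (sinh y - y) -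
        (cosh y - 1) * (y + y * cosh y - 2 * sinh y) =
        cosh y * sinh y - sinh y + y * cosh y - y - y ^ 2 * sinh y := by
        linear_combination (- y) * cosh_sq y
      rw [hs]
    rw [e]
    positivity

lemma key2 (x : ℝ) (hx : 0 < x) :
    2 * ((x * cosh x - sinh x) / (x * sinh x)) <
      exp (3 / 5 * (2 * sL x + tL x)) * ((sinh x * cosh x - x) / (x * sinh x * cosh x)) := by
  have h1 := sinh_p hx
  have h2 := cosh_pos x
  have hy : 0 < 2 * x := by positivity
  have k := key (2 * x) hy
  have e1 : sL (2 * x) = 2 * sL x + tL x := by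
    rw [tL_eq x hx]
    have : sinh (2 * x) / (2 * x) = (sinh x / x) * cosh x := by
      rw [sinh_two_mul]; field_simp
    unfold sL
    rw [this, log_mul (by positivity) (by positivity)]; ring
  rw [e1] at k
  unfold rL at k
  have h3 := den_p hy
  have h4 := sinh_g hy
  rw [log_lt_iff_lt_exp (div_pos h3 h4), div_lt_iff₀ h4, sinh_two_mul, cosh_two_mul] at k
  have e2 : 2 * ((x * cosh x - sinh x) / (x * sinh x)) =
    (2 * (x * cosh x - sinh x) * cosh x) / (x * sinh x * cosh x) := by field_simp
  rw [e2, ← mul_div_assoc]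
  apply div_lt_div_of_pos_right _ (by positivity)
  nlinarith [cosh_sq x]

lemma reform (k p x : ℝ) (hk : 1 ≤ k) (hx : 0 < x) :
    (k / (k + 2) * (sinh x / x) ^ (k * p) + 2 / (k + 2) * (tanh x / x) ^ p >
          2 / (k + 2) * (x / sinh x) ^ (k * p) + k / (k + 2) * (x / tanh x) ^ p ∧
        2 / (k + 2) * (x / sinh x) ^ (k * p) + k / (k + 2) * (x / tanh x) ^ p > 1) ↔
    (p * tL x < p * (k * sL x) ∧
      k + 2 < 2 * exp (-(k * p * sL x)) + k * exp (p * tL x)) := by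
  have h1 := sinh_p hx
  have h2 := cosh_pos x
  have h3 : 0 < tanh x := by rw [tanh_eq_sinh_div_cosh]; positivity
  have e1 : (sinh x / x) ^ (k * p) = exp (k * p * sL x) := by
    rw [rpow_def_of_pos (by positivity), mul_comm]; rfl
  have e2 : (x / tanh x) ^ p = exp (p * tL x) := by
    rw [rpow_def_of_pos (by positivity), mul_comm]; rfl
  have e3 : (x / sinh x) ^ (k * p) = exp (-(k * p * sL x)) := by
    rw [exp_neg, ← e1, ← inv_rpow (by positivity), inv_div]
  have e4 : (tanh x / x) ^ p = exp (-(p * tL x)) := by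
    rw [exp_neg, ← e2, ← inv_rpow (by positivity), inv_div]
  rw [e1, e2, e3, e4]
  have hk2 : 0 < k + 2 := by linarith
  have c1 : ∀ a b : ℝ, k / (k + 2) * a + 2 / (k + 2) * b = (k * a + 2 * b) / (k + 2) := by
    intro a b; ring
  have c2 : ∀ a b : ℝ, 2 / (k + 2) * a + k / (k + 2) * b = (2 * a + k * b) / (k + 2) := by
    intro a b; ring
  rw [c1, c2, gt_iff_lt, gt_iff_lt, div_lt_div_iff_of_pos_right hk2, one_lt_div hk2]
  refine and_congr ?_ Iff.rfl
  rw [show p * (k * sL x) = k * p * sL x by ring]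
  generalize k * p * sL x = A
  generalize p * tL x = B
  constructor
  · intro h
    by_contra hc
    push Not at hc
    have i1 := exp_le_exp.2 hc
    have i2 := exp_le_exp.2 (neg_le_neg hc)
    nlinarith
  · intro h
    have i1 := exp_lt_exp.2 h
    have i2 := exp_lt_exp.2 (neg_lt_neg h)
    nlinarith

lemma suff2 (k p : ℝ) (hk : 2 ≤ k) (hp : 12 / (5 * (k + 2)) ≤ p) (x : ℝ) (hx : 0 < x) :
    k + 2 < 2 * exp (-(k * p * sL x)) + k * exp (p * tL x) := by
  have hp0 : 0 < p := lt_of_lt_of_le (by positivity) hp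
  have := aux_pos (fun x => 2 * exp (-(k * p * sL x)) + k * exp (p * tL x) - (k + 2))
    (fun x => 2 * (exp (-(k * p * sL x)) * (-(k * p * ((x * cosh x - sinh x) / (x * sinh x))))) +
      k * (exp (p * tL x) * (p * ((sinh x * cosh x - x) / (x * sinh x * cosh x)))))
    ?_ (by simp [sL_zero, tL_zero]; ring)
    (fun x hx => ?_) (fun x hx => ?_) x hx
  · linarith
  · exact ((continuousOn_const.mul (continuousOn_const.mul sL_cont).neg.rexp).add
      (continuousOn_const.mul (continuousOn_const.mul tL_cont).rexp)).sub continuousOn_const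
  · exact (((((sL_deriv x hx).const_mul (k * p)).neg.exp).const_mul 2).add
      ((((tL_deriv x hx).const_mul p).exp).const_mul k)).sub_const _
  · have h := key2 x hx
    have h1 := sinh_p hx
    have h2 := cosh_pos x
    have h5 := aux1 x hx
    have hst := st_pos x hx
    have hs := sL_pos x hx
    have ht := tL_pos x hx
    have hle : 3 / 5 * (2 * sL x + tL x) ≤ k * p * sL x + p * tL x := by
      rw [div_le_iff₀ (by positivity)] at hp
      have a1 : 12 / 5 * (k * sL x + tL x) ≤ (p * (k + 2)) * (k * sL x + tL x) := by
        apply mul_le_mul_of_nonneg_right (by linarith) (by positivity)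
      have a2 : 0 ≤ (k - 2) * (2 * sL x - tL x) := mul_nonneg (by linarith) hst.le
      have : 0 ≤ (k + 2) * ((k * p * sL x + p * tL x) - 3 / 5 * (2 * sL x + tL x)) := by
        nlinarith
      have := nonneg_of_mul_nonneg_right this (by linarith)
      linarith
    have hT : 0 < (sinh x * cosh x - x) / (x * sinh x * cosh x) := by
      apply div_pos _ (by positivity)
      nlinarith [sinh_g hx, one_le_cosh x]
    have h6 := exp_le_exp.2 hle
    generalize (sinh x * cosh x - x) / (x * sinh x * cosh x) = T at *
    generalize (x * cosh x - sinh x) / (x * sinh x) = S at *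
    have h7 : 2 * S < exp (k * p * sL x + p * tL x) * T :=
      h.trans_le (mul_le_mul_of_nonneg_right h6 hT.le)
    have e : exp (p * tL x) = exp (-(k * p * sL x)) * exp (k * p * sL x + p * tL x) := by
      rw [← exp_add]; congr 1; ring
    rw [e]
    have : 0 < k * p * exp (-(k * p * sL x)) * (exp (k * p * sL x + p * tL x) * T - 2 * S) := by
      have : 0 < exp (k * p * sL x + p * tL x) * T - 2 * S := by linarith
      positivity
    linarith

lemma S_gt_T_at_four : tL 4 < sL 4 := by
  rw [tL_eq 4 (by norm_num)]
  have h0 := sinh_p (x := 4) (by norm_num)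
  have : log (cosh 4) < 2 * sL 4 := by
    unfold sL
    have : 2 * log (sinh 4 / 4) = log ((sinh 4 / 4) ^ 2) := by rw [log_pow]; norm_num
    rw [this]
    apply log_lt_log (cosh_pos 4)
    have hc := cosh_sq (4:ℝ)
    have h1 : (1 + 4 + 4 ^ 2 / 2 : ℝ) ≤ exp 4 := quadratic_le_exp_of_nonneg (by norm_num)
    have h3 : (2:ℝ) < exp 1 := by linarith [exp_one_gt_d9]
    have h4 : exp (4:ℝ) = exp 1 ^ 4 := by rw [← exp_nat_mul]; norm_num
    have h5 : (2.7:ℝ) ^ 4 ≤ exp 1 ^ 4 := by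
      apply pow_le_pow_left₀ (by norm_num); linarith [exp_one_gt_d9]
    have h6 : cosh 4 = (exp 4 + exp (-4)) / 2 := cosh_eq 4
    have h7 := exp_pos (-4:ℝ)
    have h8 : (26 : ℝ) ≤ cosh 4 := by rw [h6]; norm_num at h5; linarith
    nlinarith
  linarith

lemma nec_p (k p : ℝ) (hk : 1 ≤ k) (hp : p ≠ 0) (h : ∀ x > 0, p * tL x < p * (k * sL x)) :
    0 < p := by
  by_contra hc
  have hn : p < 0 := lt_of_le_of_ne (not_lt.1 hc) hp
  have h1 := h 4 (by norm_num)
  have h2 := S_gt_T_at_four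
  have h3 := sL_pos 4 (by norm_num)
  have : k * sL 4 < tL 4 := by
    by_contra h'
    nlinarith
  nlinarith

lemma nec_k (k p : ℝ) (hk : 1 ≤ k) (hp : 0 < p) (h : ∀ x > 0, p * tL x < p * (k * sL x)) :
    2 ≤ k := by
  by_contra hc
  push Not at hc
  set x := √(2 - k) with hxd
  have hx : 0 < x := Real.sqrt_pos.2 (by linarith)
  have hx2 : x ^ 2 = 2 - k := Real.sq_sqrt (by linarith)
  have h1 := lt_of_mul_lt_mul_left (h x hx) hp.le
  have h2 := tL_eq x hx
  have h3 := lc_ge x hx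
  have h4 := sL_le x hx
  have h5 : (k + 1) * sL x ≤ (k + 1) * (x ^ 2 / 6) := by gcongr
  have h6 : x ^ 4 = (2 - k) ^ 2 := by rw [← hx2]; ring
  rw [h6, hx2] at h3
  rw [hx2] at h5
  nlinarith

lemma nec_p0 (k p : ℝ) (hk : 1 ≤ k) (hp : 0 < p)
    (h : ∀ x > 0, k + 2 < 2 * exp (-(k * p * sL x)) + k * exp (p * tL x)) :
    12 / (5 * (k + 2)) ≤ p := by
  by_contra hc
  push Not at hc
  rw [lt_div_iff₀ (by positivity)] at hc
  -- gap
  set d := 1 / 15 - p * (k + 2) / 36 with hd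
  have hd0 : 0 < d := by rw [hd]; linarith
  set C := 4 / 45 + p ^ 2 / 27 with hC
  have hC0 : 0 < C := by positivity
  set z := min (d / C) (1 / p) with hz
  have hz0 : 0 < z := lt_min (by positivity) (by positivity)
  have hz1 : C * z ≤ d := by
    have : z ≤ d / C := min_le_left _ _
    rw [le_div_iff₀ hC0] at this; linarith
  have hz2 : p * z ≤ 1 := by
    have : z ≤ 1 / p := min_le_right _ _
    rw [le_div_iff₀ hp] at this; linarith
  set x := √z with hxd
  have hx : 0 < x := Real.sqrt_pos.2 hz0
  have hx2 : x ^ 2 = z := Real.sq_sqrt hz0.le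
  have hh := h x hx
  have hs := sL_pos x hx
  have ht := tL_pos x hx
  have hs1 := sL_le x hx
  have ht1 := tL_le x hx
  have hst := st_ge x hx
  rw [show x ^ 4 = (x ^ 2) ^ 2 by ring, show x ^ 6 = (x ^ 2) ^ 3 by ring] at hst
  rw [hx2] at hs1 ht1 hst
  have hA : 0 < k * p * sL x := by positivity
  have hB : 0 < p * tL x := by positivity
  have hB1 : p * tL x ≤ 1 := by nlinarith
  have b1 : exp (-(k * p * sL x)) ≤ 1 - k * p * sL x + (k * p * sL x) ^ 2 / 2 := by
    generalize k * p * sL x = A at *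
    have q := quadratic_le_exp_of_nonneg hA.le
    rw [exp_neg]
    apply inv_le_of_inv_le₀ (by nlinarith [sq_nonneg (A - 1)])
    refine le_trans ?_ q
    rw [inv_le_iff_one_le_mul₀ (by nlinarith [sq_nonneg (A - 1)])]
    nlinarith [sq_nonneg (A ^ 2)]
  have b2 : exp (p * tL x) ≤ 1 + p * tL x + (p * tL x) ^ 2 / 2 + (p * tL x) ^ 3 := by
    generalize p * tL x = B at *
    have := Real.exp_bound' hB.le hB1 (n := 3) (by norm_num)
    norm_num [Finset.sum_range_succ, Nat.factorial] at this
    have : 0 < B ^ 3 := by positivity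
    linarith
  generalize sL x = s at *
  generalize tL x = t at *
  have b3 : 0 < k * p * ((t - 2 * s) + k * p * s ^ 2 + p * t ^ 2 / 2 + p ^ 2 * t ^ 3) := by
    have b4 : k * exp (p * t) ≤ k * (1 + p * t + (p * t) ^ 2 / 2 + (p * t) ^ 3) := by gcongr
    nlinarith
  have b5 := pos_of_mul_pos_right b3 (by positivity)
  have c1 : k * p * s ^ 2 ≤ k * p * (z / 6) ^ 2 := by gcongr
  have c2 : p * t ^ 2 / 2 ≤ p * (z / 3) ^ 2 / 2 := by gcongr
  have c3 : p ^ 2 * t ^ 3 ≤ p ^ 2 * (z / 3) ^ 3 := by gcongr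
  have c4 : 0 < z ^ 2 * (C * z - d) := by
    rw [hC, hd]; nlinarith
  have c5 : z ^ 2 * (C * z - d) ≤ 0 := mul_nonpos_of_nonneg_of_nonpos (by positivity) (by linarith)
  linarith

theorem wilker_chain_hyp (k : ℝ) (hk : 1 ≤ k) (p : ℝ) (hp : p ≠ 0) :
    (∀ x ∈ Ioi (0 : ℝ),
        k / (k + 2) * (sinh x / x) ^ (k * p) + 2 / (k + 2) * (tanh x / x) ^ p >
          2 / (k + 2) * (x / sinh x) ^ (k * p) + k / (k + 2) * (x / tanh x) ^ p ∧
        2 / (k + 2) * (x / sinh x) ^ (k * p) + k / (k + 2) * (x / tanh x) ^ p > 1) ↔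
      (2 ≤ k ∧ p ≥ 12 / (5 * (k + 2))) := by
  constructor
  · intro h
    have h1 : ∀ x > 0, p * tL x < p * (k * sL x) := fun x hx =>
      ((reform k p x hk hx).1 (h x hx)).1
    have h2 : ∀ x > 0, k + 2 < 2 * exp (-(k * p * sL x)) + k * exp (p * tL x) := fun x hx =>
      ((reform k p x hk hx).1 (h x hx)).2
    have hp0 := nec_p k p hk hp h1
    exact ⟨nec_k k p hk hp0 h1, nec_p0 k p hk hp0 h2⟩
  · rintro ⟨hk2, hpp⟩ x hx
    have hx : 0 < x := hx
    have hp0 : 0 < p := lt_of_lt_of_le (by positivity) hpp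
    refine (reform k p x hk hx).2 ⟨?_, suff2 k p hk2 hpp x hx⟩
    have := st_pos x hx
    have := sL_pos x hx
    apply mul_lt_mul_of_pos_left _ hp0
    nlinarith
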